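/- arXiv:2604.04729 — 2 statements merged into one kernel-verified Lean document; each statement's English description precedes it below -/
import Mathlib

section
/- Let D = (V, E; c; s, t) be a flow network in which every arc belongs to at least one s-t path. If the flow game Γ_D is convex, then its characteristic function decomposes as a positively weighted sum of unanimity games over s-t paths: for every coalition S ⊆ E, γ(S) = Σ_{P ∈ 𝒫 : P ⊆ S} c(P). -/
open scoped Classical
open Finset

noncomputable section

/-- The arcs (consecutive vertex pairs) of a vertex list. -/
def arcsOf {V : Type*} [DecidableEq V] (vs : List V) : Finset (V × V) :=
  (vs.zip vs.tail).toFinset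

/-- `vs` is the vertex list of a directed path from `a` to `b` using arcs of `E`,
with pairwise distinct vertices. -/
def IsPathList {V : Type*} (E : Finset (V × V)) (a b : V) (vs : List V) : Prop :=
  vs.Nodup ∧ vs.head? = some a ∧ vs.getLast? = some b ∧
    vs.Chain' (fun x y => (x, y) ∈ E)

/-- `P` is (the arc set of) an `s`-`t` path in the network with arc set `E`. -/
def IsSTPath {V : Type*} [DecidableEq V] (E : Finset (V × V)) (s t : V)
    (P : Finset (V × V)) : Prop :=
  ∃ vs : List V, IsPathList E s t vs ∧ P = arcsOf vs

/-- The capacity of a path (arc set): the minimum capacity of its arcs. -/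
def pathCap {V : Type*} (c : V × V → ℝ) (P : Finset (V × V)) : ℝ :=
  sInf (c '' (P : Set (V × V)))

/-- `e` is a bottleneck arc of some `s`-`t` path, i.e. `e ∈ B`. -/
def IsBottleneck {V : Type*} [DecidableEq V] (E : Finset (V × V)) (c : V × V → ℝ)
    (s t : V) (e : V × V) : Prop :=
  ∃ P : Finset (V × V), IsSTPath E s t P ∧ e ∈ P ∧ c e = pathCap c P

/-- The finite set `𝒫` of all `s`-`t` paths (as arc sets). -/
def stPaths {V : Type*} [DecidableEq V] (E : Finset (V × V)) (s t : V) :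
    Finset (Finset (V × V)) :=
  E.powerset.filter (fun P => IsSTPath E s t P)

/-- The value of a flow `f`: net flow out of the source `s`. -/
def flowValue {V : Type*} [DecidableEq V] (E : Finset (V × V)) (s : V)
    (f : V × V → ℝ) : ℝ :=
  ∑ e ∈ E.filter (fun e => e.1 = s), f e - ∑ e ∈ E.filter (fun e => e.2 = s), f e

/-- `f` is a feasible flow on the coalition `S`. -/
def IsFeasibleFlow {V : Type*} [DecidableEq V] (E : Finset (V × V)) (c : V × V → ℝ)
    (s t : V) (S : Finset (V × V)) (f : V × V → ℝ) : Prop :=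
  (∀ e ∈ E, 0 ≤ f e ∧ f e ≤ c e) ∧
  (∀ e, e ∉ S → f e = 0) ∧
  (∀ v, v ≠ s → v ≠ t →
    ∑ e ∈ E.filter (fun e => e.2 = v), f e = ∑ e ∈ E.filter (fun e => e.1 = v), f e)

/-- `γ` is the characteristic function of the flow game on `D = (V,E;c;s,t)`:
for each coalition `S ⊆ E`, `γ S` is the maximum value of a feasible flow on `S`. -/
def IsFlowGame {V : Type*} [DecidableEq V] (E : Finset (V × V)) (c : V × V → ℝ)
    (s t : V) (γ : Finset (V × V) → ℝ) : Prop :=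
  ∀ S : Finset (V × V), S ⊆ E →
    IsGreatest {x : ℝ | ∃ f, IsFeasibleFlow E c s t S f ∧ flowValue E s f = x} (γ S)

/-- The cooperative game `γ` with player set `E` is convex (supermodular). -/
def GameConvex {V : Type*} [DecidableEq V] (E : Finset (V × V))
    (γ : Finset (V × V) → ℝ) : Prop :=
  ∀ e ∈ E, ∀ S T : Finset (V × V), S ⊆ T → T ⊆ E.erase e →
    γ (insert e S) - γ S ≤ γ (insert e T) - γ T

/-- The directed graph with arc set `E` contains a directed cycle. -/
def HasDirectedCycle {V : Type*} (E : Finset (V × V)) : Prop :=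
  ∃ (v : V) (vs : List V), (v :: vs).Nodup ∧
    (v :: vs).Chain' (fun x y => (x, y) ∈ E) ∧
    ((v :: vs).getLast (List.cons_ne_nil v vs), v) ∈ E

section Helpers

variable {V : Type*} [DecidableEq V]

lemma arcsOf_nil : arcsOf ([] : List V) = ∅ := by simp [arcsOf]

lemma arcsOf_single (a : V) : arcsOf [a] = ∅ := by simp [arcsOf]

lemma arcsOf_cons_cons (a b : V) (l : List V) :
    arcsOf (a :: b :: l) = insert (a, b) (arcsOf (b :: l)) := by simp [arcsOf]

lemma mem_of_mem_arcsOf {x y : V} {l : List V} (h : (x, y) ∈ arcsOf l) : x ∈ l ∧ y ∈ l := by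
  have h' : (x, y) ∈ l.zip l.tail := by simpa [arcsOf] using h
  have := List.of_mem_zip h'
  exact ⟨this.1, List.mem_of_mem_tail this.2⟩

lemma arcsOf_append (l : List V) (y : V) (m : List V) :
    arcsOf (l ++ y :: m) = arcsOf (l ++ [y]) ∪ arcsOf (y :: m) := by
  induction l with
  | nil => simp [arcsOf_single]
  | cons a l ih =>
    cases l with
    | nil => ext p; simp [arcsOf_cons_cons, arcsOf_single]
    | cons b l =>
      simp only [List.cons_append, arcsOf_cons_cons] at ih ⊢
      rw [ih, Finset.insert_union]

lemma exists_split_of_mem_arcsOf {x y : V} {l : List V} (h : (x, y) ∈ arcsOf l) :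
    ∃ p q, l = p ++ x :: y :: q := by
  induction l with
  | nil => simp [arcsOf_nil] at h
  | cons a l ih =>
    cases l with
    | nil => simp [arcsOf_single] at h
    | cons b l =>
      rw [arcsOf_cons_cons, Finset.mem_insert] at h
      rcases h with h | h
      · obtain ⟨rfl, rfl⟩ := Prod.mk.inj h
        exact ⟨[], l, rfl⟩
      · obtain ⟨p, q, h⟩ := ih h
        exact ⟨a :: p, q, by rw [h]; rfl⟩

lemma chain_iff (E : Finset (V × V)) (l : List V) :
    l.IsChain (fun x y => (x, y) ∈ E) ↔ arcsOf l ⊆ E := by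
  induction l with
  | nil => simp [arcsOf_nil]
  | cons a l ih =>
    cases l with
    | nil => simp [arcsOf_single]
    | cons b l =>
      rw [List.isChain_cons_cons, ih, arcsOf_cons_cons, Finset.insert_subset_iff]

lemma pathList_iff (E : Finset (V × V)) (a b : V) (l : List V) :
    IsPathList E a b l ↔ l.Nodup ∧ l.head? = some a ∧ l.getLast? = some b ∧ arcsOf l ⊆ E := by
  rw [← chain_iff]; rfl

lemma arcs_trichotomy {l r : List V} {a b x y : V} (h : (x, y) ∈ arcsOf (l ++ a :: b :: r)) :
    (x ∈ l ++ [a] ∧ y ∈ l ++ [a]) ∨ (x, y) = (a, b) ∨ (x ∈ b :: r ∧ y ∈ b :: r) := by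
  rw [arcsOf_append, arcsOf_cons_cons, Finset.mem_union, Finset.mem_insert] at h
  rcases h with h | h | h
  · exact Or.inl (mem_of_mem_arcsOf h)
  · exact Or.inr (Or.inl h)
  · exact Or.inr (Or.inr (mem_of_mem_arcsOf h))

lemma path_eq_of_subset_aux (t : V) : ∀ (l₁ l₂ : List V) (x : V),
    (x :: l₁).Nodup → (x :: l₂).Nodup → (x :: l₁).getLast? = some t →
    (x :: l₂).getLast? = some t → arcsOf (x :: l₁) ⊆ arcsOf (x :: l₂) → l₁ = l₂ := by
  intro l₁
  induction l₁ with
  | nil =>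
    intro l₂ x _ n2 h1 h2 _
    simp at h1
    subst h1
    cases l₂ with
    | nil => rfl
    | cons z l =>
      exfalso
      rw [List.getLast?_cons_cons] at h2
      exact (List.nodup_cons.1 n2).1 (List.mem_of_getLast? h2)
  | cons y l₁ ih =>
    intro l₂ x n1 n2 h1 h2 hs
    cases l₂ with
    | nil =>
      exfalso
      have : (x, y) ∈ arcsOf [x] := hs (by rw [arcsOf_cons_cons]; simp)
      simp [arcsOf_single] at this
    | cons z l₂ =>
      have hx : (x, y) ∈ arcsOf (x :: z :: l₂) := hs (by rw [arcsOf_cons_cons]; simp)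
      rw [arcsOf_cons_cons, Finset.mem_insert] at hx
      have hyz : y = z := by
        rcases hx with hx | hx
        · exact (Prod.mk.inj hx).2
        · exact absurd (mem_of_mem_arcsOf hx).1 (List.nodup_cons.1 n2).1
      subst hyz
      rw [List.getLast?_cons_cons] at h1 h2
      congr 1
      refine ih l₂ y (List.nodup_cons.1 n1).2 (List.nodup_cons.1 n2).2 h1 h2 ?_
      rintro ⟨u, w⟩ hu
      have := hs (by rw [arcsOf_cons_cons]; exact Finset.mem_insert_of_mem hu)
      rw [arcsOf_cons_cons, Finset.mem_insert] at this
      rcases this with h | h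
      · obtain ⟨rfl, rfl⟩ := Prod.mk.inj h
        exact absurd (mem_of_mem_arcsOf hu).1 (List.nodup_cons.1 n1).1
      · exact h

lemma head_cons {a : V} {l : List V} (h : l.head? = some a) : ∃ l', l = a :: l' := by
  cases l with
  | nil => simp at h
  | cons b l => simp at h; subst h; exact ⟨l, rfl⟩

lemma path_eq_of_subset {E E' : Finset (V × V)} {s t : V} {v₁ v₂ : List V}
    (h1 : IsPathList E s t v₁) (h2 : IsPathList E' s t v₂) (h : arcsOf v₁ ⊆ arcsOf v₂) :
    v₁ = v₂ := by
  rw [pathList_iff] at h1 h2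
  obtain ⟨n1, a1, b1, -⟩ := h1
  obtain ⟨n2, a2, b2, -⟩ := h2
  obtain ⟨l1, rfl⟩ := head_cons a1
  obtain ⟨l2, rfl⟩ := head_cons a2
  rw [path_eq_of_subset_aux t l1 l2 s n1 n2 b1 b2 h]

lemma telescope (h : V → ℝ) (t : V) : ∀ (l : List V) (x : V), (x :: l).Nodup →
    (x :: l).getLast? = some t →
    ∑ e ∈ arcsOf (x :: l), (h e.1 - h e.2) = h x - h t := by
  intro l
  induction l with
  | nil => intro x _ hx; simp at hx; subst hx; simp [arcsOf_single]
  | cons y l ih =>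
    intro x n hx
    rw [arcsOf_cons_cons, Finset.sum_insert, ih y (List.nodup_cons.1 n).2
      (by rwa [List.getLast?_cons_cons] at hx)]
    · ring
    · intro hm
      exact (List.nodup_cons.1 n).1 (mem_of_mem_arcsOf hm).1

/-- net outflow at a vertex -/
lemma net_eq (E : Finset (V × V)) (f : V × V → ℝ) (v : V) :
    ∑ e ∈ E.filter (fun e => e.1 = v), f e - ∑ e ∈ E.filter (fun e => e.2 = v), f e =
    ∑ e ∈ E, f e * ((if e.1 = v then 1 else 0) - (if e.2 = v then 1 else 0)) := by
  rw [Finset.sum_filter, Finset.sum_filter, ← Finset.sum_sub_distrib]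
  refine Finset.sum_congr rfl fun e _ => ?_
  split_ifs <;> simp

/-- net outflow of a path indicator -/
lemma net_path {E : Finset (V × V)} {s t : V} {l : List V} (hl : IsPathList E s t l) (m : ℝ)
    (v : V) :
    ∑ e ∈ E.filter (fun e => e.1 = v), (if e ∈ arcsOf l then m else 0)
      - ∑ e ∈ E.filter (fun e => e.2 = v), (if e ∈ arcsOf l then m else 0) =
    m * ((if s = v then 1 else 0) - (if t = v then 1 else 0)) := by
  rw [pathList_iff] at hl
  obtain ⟨n, a, b, hE⟩ := hl
  obtain ⟨l, rfl⟩ := head_cons a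
  rw [net_eq, ← telescope (fun w => if w = v then 1 else 0) t l s n b, Finset.mul_sum,
    ← Finset.sum_subset hE]
  · refine Finset.sum_congr rfl fun e he => ?_
    rw [if_pos he]
  · intro e _ he
    rw [if_neg he, zero_mul]

lemma cut_bound [Fintype V] {E : Finset (V × V)} {c : V × V → ℝ} {s t : V}
    {S : Finset (V × V)} {f : V × V → ℝ} (hf : IsFeasibleFlow E c s t S f)
    (X : Finset V) (hs : s ∈ X) (ht : t ∉ X) :
    flowValue E s f ≤ ∑ e ∈ E.filter (fun e => e.1 ∈ X ∧ e.2 ∉ X), f e := by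
  obtain ⟨h1, h2, h3⟩ := hf
  have key : flowValue E s f = ∑ v ∈ X, ∑ e ∈ E,
      f e * ((if e.1 = v then 1 else 0) - (if e.2 = v then 1 else 0)) := by
    rw [Finset.sum_eq_single_of_mem s hs]
    · rw [flowValue, net_eq]
    · intro v hv hvs
      rw [← net_eq, h3 v hvs (fun h => ht (h ▸ hv)), sub_self]
  rw [key, Finset.sum_comm, Finset.sum_filter]
  refine Finset.sum_le_sum fun e he => ?_
  rw [← Finset.mul_sum, Finset.sum_sub_distrib, Finset.sum_ite_eq, Finset.sum_ite_eq]
  have := (h1 e he).1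
  by_cases ha : e.1 ∈ X <;> by_cases hb : e.2 ∈ X <;> simp [ha, hb, this]

lemma value_le_zero [Fintype V] {E : Finset (V × V)} {c : V × V → ℝ} {s t : V}
    {S : Finset (V × V)} {f : V × V → ℝ} (hf : IsFeasibleFlow E c s t S f)
    (hno : ∀ l, ¬ IsPathList S s t l) : flowValue E s f ≤ 0 := by
  refine (cut_bound hf (Finset.univ.filter fun v => ¬ ∃ l, IsPathList S v t l) ?_ ?_).trans ?_
  · simpa using hno
  · simp only [Finset.mem_filter, Finset.mem_univ, true_and, not_not]
    exact ⟨[t], by rw [pathList_iff]; simp [arcsOf_single]⟩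
  · refine (Finset.sum_eq_zero ?_).le
    rintro ⟨x, y⟩ he
    simp only [Finset.mem_filter, Finset.mem_univ, true_and, not_not] at he
    obtain ⟨-, hx, l, hl⟩ := he
    apply hf.2.1
    intro hS
    rw [pathList_iff] at hl
    obtain ⟨n, a, b, hE⟩ := hl
    by_cases hxl : x ∈ l
    · obtain ⟨p, q, rfl⟩ := List.append_of_mem hxl
      refine hx ⟨x :: q, ?_⟩
      rw [pathList_iff]
      refine ⟨(List.nodup_append.1 n).2.1, rfl, ?_, ?_⟩
      · rw [List.getLast?_append_of_ne_nil _ (by simp)] at b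
        exact b
      · rw [arcsOf_append] at hE
        exact Finset.union_subset_right hE
    · obtain ⟨l, rfl⟩ := head_cons a
      refine hx ⟨x :: y :: l, ?_⟩
      rw [pathList_iff]
      refine ⟨List.nodup_cons.2 ⟨hxl, n⟩, rfl, ?_, ?_⟩
      · rw [List.getLast?_cons_cons]; exact b
      · rw [arcsOf_cons_cons]; exact Finset.insert_subset hS hE

lemma arcs_nonempty {E : Finset (V × V)} {s t : V} (hst : s ≠ t) {l : List V}
    (hl : IsPathList E s t l) : (arcsOf l).Nonempty := by
  rw [pathList_iff] at hl
  obtain ⟨n, a, b, hE⟩ := hl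
  obtain ⟨l, rfl⟩ := head_cons a
  cases l with
  | nil => simp at b; exact absurd b hst
  | cons y l => rw [arcsOf_cons_cons]; exact Finset.insert_nonempty _ _

lemma pathCap_le (c : V × V → ℝ) {P : Finset (V × V)} {e : V × V} (he : e ∈ P) :
    pathCap c P ≤ c e :=
  csInf_le ((P.finite_toSet.image c).bddBelow) ⟨e, he, rfl⟩

lemma exists_bottleneck (c : V × V → ℝ) {P : Finset (V × V)} (hP : P.Nonempty) :
    ∃ e ∈ P, c e = pathCap c P := by
  have := Set.Nonempty.csInf_mem (s := c '' (P : Set (V × V)))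
    (by simpa using hP) (P.finite_toSet.image c)
  obtain ⟨e, he, h⟩ := this
  exact ⟨e, he, h⟩

lemma isPathList_mono {S T : Finset (V × V)} {s t : V} {l : List V} (h : S ⊆ T)
    (hl : IsPathList S s t l) : IsPathList T s t l := by
  rw [pathList_iff] at *
  exact ⟨hl.1, hl.2.1, hl.2.2.1, hl.2.2.2.trans h⟩

lemma isPathList_of_subset {S T : Finset (V × V)} {s t : V} {l : List V}
    (hl : IsPathList S s t l) (h : arcsOf l ⊆ T) : IsPathList T s t l := by
  rw [pathList_iff] at *
  exact ⟨hl.1, hl.2.1, hl.2.2.1, h⟩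

lemma arcs_subset {S : Finset (V × V)} {s t : V} {l : List V}
    (hl : IsPathList S s t l) : arcsOf l ⊆ S := ((pathList_iff _ _ _ _).1 hl).2.2.2

/-- Path-stripping upper bound. -/
lemma value_le_sum [Fintype V] {E : Finset (V × V)} {c : V × V → ℝ} {s t : V} (hst : s ≠ t)
    (hc : ∀ e ∈ E, 0 < c e) : ∀ (n : ℕ) (S : Finset (V × V)), S ⊆ E → S.card ≤ n →
    ∀ f, IsFeasibleFlow E c s t S f →
    flowValue E s f ≤ ∑ P ∈ (stPaths E s t).filter (fun P => P ⊆ S), pathCap c P := by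
  have hnn : ∀ P ∈ stPaths E s t, 0 ≤ pathCap c P := by
    intro P hP
    simp only [stPaths, Finset.mem_filter, Finset.mem_powerset] at hP
    obtain ⟨hPE, l, hl, rfl⟩ := hP
    obtain ⟨e, he, h⟩ := exists_bottleneck c (arcs_nonempty hst hl)
    rw [← h]; exact (hc e (hPE he)).le
  have mono : ∀ S T : Finset (V × V), S ⊆ T →
      ∑ P ∈ (stPaths E s t).filter (fun P => P ⊆ S), pathCap c P ≤
      ∑ P ∈ (stPaths E s t).filter (fun P => P ⊆ T), pathCap c P := by
    intro S T h
    refine Finset.sum_le_sum_of_subset_of_nonneg ?_ ?_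
    · intro P hP
      simp only [Finset.mem_filter] at hP ⊢
      exact ⟨hP.1, hP.2.trans h⟩
    · intro P hP _
      exact hnn P (Finset.mem_filter.1 hP).1
  intro n
  induction n with
  | zero =>
    intro S hS hn f hf
    have : S = ∅ := by simpa using hn
    subst this
    refine (value_le_zero hf ?_).trans
      (Finset.sum_nonneg fun P hP => hnn P (Finset.mem_filter.1 hP).1)
    intro l hl
    obtain ⟨e, he⟩ := arcs_nonempty hst hl
    simpa using arcs_subset hl he
  | succ n ih =>
    intro S hS hn f hf
    by_cases hno : ∀ l, ¬ IsPathList S s t l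
    · exact (value_le_zero hf hno).trans
        (Finset.sum_nonneg fun P hP => hnn P (Finset.mem_filter.1 hP).1)
    push Not at hno
    obtain ⟨l, hl⟩ := hno
    have hlE := isPathList_mono hS hl
    have hPS := arcs_subset hl
    obtain ⟨e, he, hmin⟩ := Finset.exists_min_image (arcsOf l) f (arcs_nonempty hst hl)
    have hPmem : arcsOf l ∈ stPaths E s t := by
      simp only [stPaths, Finset.mem_filter, Finset.mem_powerset]
      exact ⟨hPS.trans hS, l, hlE, rfl⟩
    set m := f e with hm
    have hm0 : 0 ≤ m := (hf.1 e (hS (hPS he))).1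
    set g : V × V → ℝ := fun x => f x - (if x ∈ arcsOf l then m else 0) with hg
    have hgf : IsFeasibleFlow E c s t (S.erase e) g := by
      refine ⟨?_, ?_, ?_⟩
      · intro x hx
        have := hf.1 x hx
        simp only [hg]
        split_ifs with hxl
        · have := hmin x hxl
          constructor <;> linarith
        · simpa using this
      · intro x hx
        by_cases hxe : x = e
        · subst hxe; simp [hg, he, hm]
        · have hxS : x ∉ S := fun h => hx (Finset.mem_erase.2 ⟨hxe, h⟩)
          simp only [hg]
          rw [if_neg (fun h => hxS (hPS h)), hf.2.1 x hxS, sub_zero]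
      · intro v hvs hvt
        have h1 := hf.2.2 v hvs hvt
        have h2 := net_path hlE m v
        rw [if_neg hvs.symm, if_neg hvt.symm] at h2
        simp only [hg]
        rw [Finset.sum_sub_distrib, Finset.sum_sub_distrib]
        linarith
    have hval : flowValue E s f = flowValue E s g + m := by
      have h2 := net_path hlE m s
      rw [if_pos rfl, if_neg hst.symm] at h2
      simp only [hg, flowValue]
      rw [Finset.sum_sub_distrib, Finset.sum_sub_distrib]
      linarith
    have hlt : (S.erase e).card ≤ n := by
      rw [Finset.card_erase_of_mem (hPS he)]; omega
    have h1 := ih (S.erase e) ((Finset.erase_subset _ _).trans hS) hlt g hgf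
    have hmc : m ≤ pathCap c (arcsOf l) := by
      obtain ⟨e', he', h'⟩ := exists_bottleneck c (arcs_nonempty hst hl)
      rw [← h']
      exact (hmin e' he').trans (hf.1 e' (hS (hPS he'))).2
    have hins : ∑ P ∈ (stPaths E s t).filter (fun P => P ⊆ S.erase e), pathCap c P
        + pathCap c (arcsOf l) ≤
        ∑ P ∈ (stPaths E s t).filter (fun P => P ⊆ S), pathCap c P := by
      rw [add_comm, ← Finset.sum_insert (s := (stPaths E s t).filter (fun P => P ⊆ S.erase e))]
      · refine Finset.sum_le_sum_of_subset_of_nonneg ?_ ?_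
        · intro P hP
          simp only [Finset.mem_filter, Finset.mem_insert] at hP ⊢
          rcases hP with rfl | hP
          · exact ⟨hPmem, hPS⟩
          · exact ⟨hP.1, hP.2.trans (Finset.erase_subset _ _)⟩
        · intro P hP _
          exact hnn P (Finset.mem_filter.1 hP).1
      · intro h
        exact Finset.notMem_erase e S ((Finset.mem_filter.1 h).2 he)
    linarith

section Game

variable [Fintype V] {E : Finset (V × V)} {c : V × V → ℝ} {s t : V} {γ : Finset (V × V) → ℝ}

lemma gamma_nonpos (hγ : IsFlowGame E c s t γ) {S : Finset (V × V)} (hS : S ⊆ E)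
    (hno : ∀ l, ¬ IsPathList S s t l) : γ S ≤ 0 := by
  obtain ⟨f, hf, h⟩ := (hγ S hS).1
  rw [← h]; exact value_le_zero hf hno

lemma gamma_mono (hγ : IsFlowGame E c s t γ) {S T : Finset (V × V)} (hT : T ⊆ E)
    (hST : S ⊆ T) : γ S ≤ γ T := by
  obtain ⟨f, hf, h⟩ := (hγ S (hST.trans hT)).1
  exact (hγ T hT).2 ⟨f, ⟨hf.1, fun e he => hf.2.1 e (fun h => he (hST h)), hf.2.2⟩, h⟩

lemma gamma_nonneg (hc : ∀ e ∈ E, 0 < c e) (hγ : IsFlowGame E c s t γ) {S : Finset (V × V)}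
    (hS : S ⊆ E) : 0 ≤ γ S := by
  refine (hγ S hS).2 ⟨fun _ => 0, ⟨fun e he => ⟨le_rfl, (hc e he).le⟩, fun _ _ => rfl, ?_⟩, ?_⟩
  · intro v _ _; simp
  · simp [flowValue]

lemma pathCap_pos (hst : s ≠ t) (hc : ∀ e ∈ E, 0 < c e) {l : List V}
    (hl : IsPathList E s t l) : 0 < pathCap c (arcsOf l) := by
  obtain ⟨e, he, h⟩ := exists_bottleneck c (arcs_nonempty hst hl)
  rw [← h]; exact hc e (arcs_subset hl he)

lemma gamma_path (hst : s ≠ t) (hc : ∀ e ∈ E, 0 < c e) (hγ : IsFlowGame E c s t γ)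
    {l : List V} (hl : IsPathList E s t l) : pathCap c (arcsOf l) ≤ γ (arcsOf l) := by
  have hpos := pathCap_pos hst hc hl
  refine (hγ _ (arcs_subset hl)).2
    ⟨fun e => if e ∈ arcsOf l then pathCap c (arcsOf l) else 0, ⟨?_, ?_, ?_⟩, ?_⟩
  · intro e he
    dsimp only
    split_ifs with h
    · exact ⟨hpos.le, pathCap_le c h⟩
    · exact ⟨le_rfl, (hc e he).le⟩
  · intro e he; simp [he]
  · intro v hvs hvt
    have h2 := net_path hl (pathCap c (arcsOf l)) v
    rw [if_neg hvs.symm, if_neg hvt.symm] at h2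
    linarith
  · have h2 := net_path hl (pathCap c (arcsOf l)) s
    rw [if_pos rfl, if_neg hst.symm] at h2
    rw [flowValue, h2]; ring

lemma gamma_erase (hγ : IsFlowGame E c s t γ)
    {l : List V} (hl : IsPathList E s t l) {e : V × V} (he : e ∈ arcsOf l) :
    γ ((arcsOf l).erase e) ≤ 0 := by
  refine gamma_nonpos hγ ((Finset.erase_subset _ _).trans (arcs_subset hl)) fun k hk => ?_
  have hs := arcs_subset hk
  have := path_eq_of_subset hk hl (hs.trans (Finset.erase_subset _ _))
  subst this
  exact Finset.notMem_erase _ _ (hs he)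

lemma marginal (hst : s ≠ t) (hc : ∀ e ∈ E, 0 < c e) (hγ : IsFlowGame E c s t γ)
    (hconv : GameConvex E γ) {l : List V} (hl : IsPathList E s t l) {e : V × V}
    (he : e ∈ arcsOf l) {S : Finset (V × V)} (hS : S ⊆ E) (hlS : arcsOf l ⊆ S) :
    γ (S.erase e) + pathCap c (arcsOf l) ≤ γ S := by
  have h := hconv e (arcs_subset hl he) ((arcsOf l).erase e) (S.erase e)
    (Finset.erase_subset_erase e hlS) (Finset.erase_subset_erase e hS)
  rw [Finset.insert_erase he, Finset.insert_erase (hlS he)] at h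
  have h1 := gamma_erase hγ hl he
  have h2 := gamma_path hst hc hγ hl
  linarith

lemma gamma_union (hst : s ≠ t) (hc : ∀ e ∈ E, 0 < c e) (hγ : IsFlowGame E c s t γ)
    (hconv : GameConvex E γ) {k l : List V} (hk : IsPathList E s t k) (hl : IsPathList E s t l)
    (hne : k ≠ l) : pathCap c (arcsOf k) < γ (arcsOf k ∪ arcsOf l) := by
  obtain ⟨e, hel, hek⟩ : ∃ e ∈ arcsOf l, e ∉ arcsOf k := by
    by_contra! h
    exact hne (path_eq_of_subset hl hk h).symm
  have hU : arcsOf k ∪ arcsOf l ⊆ E := Finset.union_subset (arcs_subset hk) (arcs_subset hl)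
  have h1 := marginal hst hc hγ hconv hl hel hU Finset.subset_union_right
  have h2 : γ (arcsOf k) ≤ γ ((arcsOf k ∪ arcsOf l).erase e) := by
    refine gamma_mono hγ ((Finset.erase_subset _ _).trans hU) ?_
    intro x hx
    exact Finset.mem_erase.2 ⟨fun h => hek (h ▸ hx), Finset.mem_union_left _ hx⟩
  have h3 := gamma_path hst hc hγ hk
  have h4 := pathCap_pos hst hc hl
  linarith

lemma gamma_cut (hγ : IsFlowGame E c s t γ) {S : Finset (V × V)} (hS : S ⊆ E)
    (X : Finset V) (hs : s ∈ X) (ht : t ∉ X) (e : V × V) (he : e ∈ E)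
    (h : ∀ x ∈ S, x.1 ∈ X → x.2 ∉ X → x = e) : γ S ≤ c e := by
  obtain ⟨f, hf, hv⟩ := (hγ S hS).1
  rw [← hv]
  refine (cut_bound hf X hs ht).trans ?_
  calc _ ≤ ∑ x ∈ E, (if x = e then f x else 0) := by
        rw [Finset.sum_filter]
        refine Finset.sum_le_sum fun x hx => ?_
        have hx0 := (hf.1 x hx).1
        by_cases hxe : x = e
        · rw [if_pos hxe]
          split_ifs
          · exact le_rfl
          · exact hx0
        · rw [if_neg hxe]
          split_ifs with h'
          · refine (hf.2.1 x fun hxS => hxe (h x hxS h'.1 h'.2)).le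
          · exact le_rfl
    _ = f e := by rw [Finset.sum_ite_eq' E e f, if_pos he]
    _ ≤ c e := (hf.1 e he).2

lemma common_prefix (hst : s ≠ t) (hc : ∀ e ∈ E, 0 < c e) (hγ : IsFlowGame E c s t γ)
    (hconv : GameConvex E γ) {l r₁ r₂ : List V} {a b : V}
    (h1 : IsPathList E s t (l ++ a :: b :: r₁)) (h2 : IsPathList E s t (l ++ a :: b :: r₂))
    (hb : c (a, b) = pathCap c (arcsOf (l ++ a :: b :: r₁))) :
    l ++ a :: b :: r₁ = l ++ a :: b :: r₂ := by
  by_contra hne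
  have hlt := gamma_union hst hc hγ hconv h1 h2 hne
  have hab : (a, b) ∈ arcsOf (l ++ a :: b :: r₁) := by
    rw [arcsOf_append, arcsOf_cons_cons]; simp
  rw [← hb] at hlt
  refine absurd hlt (not_lt.2 ?_)
  have h1' := (pathList_iff _ _ _ _).1 h1
  have h2' := (pathList_iff _ _ _ _).1 h2
  have d1 : ∀ x ∈ l ++ [a], x ∉ b :: r₁ := by
    have := h1'.1
    rw [List.append_cons, List.nodup_append] at this
    exact fun x hx hx' => this.2.2 x hx x hx' rfl
  have d2 : ∀ x ∈ l ++ [a], x ∉ b :: r₂ := by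
    have := h2'.1
    rw [List.append_cons, List.nodup_append] at this
    exact fun x hx hx' => this.2.2 x hx x hx' rfl
  refine gamma_cut hγ (Finset.union_subset (arcs_subset h1) (arcs_subset h2))
    (l ++ [a]).toFinset ?_ ?_ (a, b) (arcs_subset h1 hab) ?_
  · rw [List.mem_toFinset]
    have := h1'.2.1
    cases l with
    | nil => simp at this; simp [this]
    | cons z l => simp at this; simp [this]
  · rw [List.mem_toFinset]
    intro ht
    refine d1 t ht ?_
    have := h1'.2.2.1
    rw [List.append_cons, List.getLast?_append_of_ne_nil _ (by simp)] at this
    exact List.mem_of_getLast? this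
  · rintro ⟨x, y⟩ hx hxX hyX
    rw [List.mem_toFinset] at hxX hyX
    rcases Finset.mem_union.1 hx with hx | hx
    · rcases arcs_trichotomy hx with h | h | h
      · exact absurd h.2 hyX
      · exact h
      · exact absurd h.1 (d1 x hxX)
    · rcases arcs_trichotomy hx with h | h | h
      · exact absurd h.2 hyX
      · exact h
      · exact absurd h.1 (d2 x hxX)

lemma common_suffix (hst : s ≠ t) (hc : ∀ e ∈ E, 0 < c e) (hγ : IsFlowGame E c s t γ)
    (hconv : GameConvex E γ) {l₁ l₂ r : List V} {a b : V}
    (h1 : IsPathList E s t (l₁ ++ a :: b :: r)) (h2 : IsPathList E s t (l₂ ++ a :: b :: r))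
    (hb : c (a, b) = pathCap c (arcsOf (l₁ ++ a :: b :: r))) :
    l₁ ++ a :: b :: r = l₂ ++ a :: b :: r := by
  by_contra hne
  have hlt := gamma_union hst hc hγ hconv h1 h2 hne
  have hab : (a, b) ∈ arcsOf (l₁ ++ a :: b :: r) := by
    rw [arcsOf_append, arcsOf_cons_cons]; simp
  rw [← hb] at hlt
  refine absurd hlt (not_lt.2 ?_)
  have h1' := (pathList_iff _ _ _ _).1 h1
  have h2' := (pathList_iff _ _ _ _).1 h2
  have d1 : ∀ x ∈ l₁ ++ [a], x ∉ b :: r := by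
    have := h1'.1
    rw [List.append_cons, List.nodup_append] at this
    exact fun x hx hx' => this.2.2 x hx x hx' rfl
  have d2 : ∀ x ∈ l₂ ++ [a], x ∉ b :: r := by
    have := h2'.1
    rw [List.append_cons, List.nodup_append] at this
    exact fun x hx hx' => this.2.2 x hx x hx' rfl
  refine gamma_cut hγ (Finset.union_subset (arcs_subset h1) (arcs_subset h2))
    ((b :: r).toFinset)ᶜ ?_ ?_ (a, b) (arcs_subset h1 hab) ?_
  · rw [Finset.mem_compl, List.mem_toFinset]
    refine d1 s ?_
    have := h1'.2.1
    cases l₁ with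
    | nil => simp at this; simp [this]
    | cons z l => simp at this; simp [this]
  · rw [Finset.mem_compl, List.mem_toFinset, not_not]
    have := h1'.2.2.1
    rw [List.append_cons, List.getLast?_append_of_ne_nil _ (by simp)] at this
    exact List.mem_of_getLast? this
  · rintro ⟨x, y⟩ hx hxX hyX
    rw [Finset.mem_compl, List.mem_toFinset] at hxX hyX
    rw [not_not] at hyX
    rcases Finset.mem_union.1 hx with hx | hx
    · rcases arcs_trichotomy hx with h | h | h
      · exact absurd hyX (d1 y h.2)
      · exact h
      · exact absurd h.1 hxX
    · rcases arcs_trichotomy hx with h | h | h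
      · exact absurd hyX (d2 y h.2)
      · exact h
      · exact absurd h.1 hxX

lemma splice {l₁ l₂ m₁ m₂ : List V} {y : V}
    (h1 : IsPathList E s t (l₁ ++ y :: l₂)) (h2 : IsPathList E s t (m₁ ++ y :: m₂))
    (hd : ∀ x ∈ l₁, x ∉ y :: m₂) : IsPathList E s t (l₁ ++ y :: m₂) := by
  rw [pathList_iff] at *
  obtain ⟨n1, a1, b1, e1⟩ := h1
  obtain ⟨n2, a2, b2, e2⟩ := h2
  rw [arcsOf_append] at *
  refine ⟨?_, ?_, ?_, ?_⟩
  · rw [List.nodup_append] at *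
    exact ⟨n1.1, n2.2.1, fun x hx z hz h => hd x hx (h ▸ hz)⟩
  · cases l₁ with
    | nil => simpa using a1
    | cons z l => simpa using a1
  · rw [List.getLast?_append_of_ne_nil _ (by simp)] at *
    exact b2
  · exact Finset.union_subset (Finset.union_subset_left e1) (Finset.union_subset_right e2)

lemma bottleneck_unique (hst : s ≠ t) (hc : ∀ e ∈ E, 0 < c e) (hγ : IsFlowGame E c s t γ)
    (hconv : GameConvex E γ) {v w : List V} {e : V × V}
    (hv : IsPathList E s t v) (hw : IsPathList E s t w) (hev : e ∈ arcsOf v) (hew : e ∈ arcsOf w)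
    (hb : c e = pathCap c (arcsOf v)) : v = w := by
  obtain ⟨a, b⟩ := e
  obtain ⟨p₁, p₂, rfl⟩ := exists_split_of_mem_arcsOf hev
  obtain ⟨q₁, q₂, rfl⟩ := exists_split_of_mem_arcsOf hew
  have nv := ((pathList_iff _ _ _ _).1 hv).1
  have nw := ((pathList_iff _ _ _ _).1 hw).1
  have haq : a ∉ b :: q₂ := (List.nodup_cons.1 (List.nodup_append.1 nw).2.1).1
  have hap : a ∉ p₁ := fun h => (List.nodup_append.1 nv).2.2 a h a (by simp) rfl
  have hbp : b ∉ p₁ := fun h => (List.nodup_append.1 nv).2.2 b h b (by simp) rfl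
  by_cases hy : ∃ y ∈ p₁, y ∈ b :: q₂
  · exfalso
    obtain ⟨l₁, y, l₂, rfl, hyq, hfirst⟩ : ∃ l₁ y l₂, p₁ = l₁ ++ y :: l₂ ∧ y ∈ b :: q₂ ∧
        ∀ x ∈ l₁, x ∉ b :: q₂ := by
      have h : (p₁.find? (fun x => decide (x ∈ b :: q₂))).isSome := by
        rw [List.find?_isSome]; simpa using hy
      obtain ⟨y, h⟩ := Option.isSome_iff_exists.1 h
      rw [List.find?_eq_some_iff_append] at h
      obtain ⟨h1, l₁, l₂, h2, h3⟩ := h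
      exact ⟨l₁, y, l₂, h2, by simpa using h1, fun x hx => by simpa using h3 x hx⟩
    obtain ⟨m₁, m₂, hm⟩ := List.append_of_mem hyq
    have hsub : ∀ x ∈ y :: m₂, x ∈ b :: q₂ := by
      intro x hx; rw [hm]; exact List.mem_append_right _ hx
    have e1 : l₁ ++ y :: l₂ ++ a :: b :: p₂ = l₁ ++ y :: (l₂ ++ a :: b :: p₂) := by simp
    have e2 : q₁ ++ a :: b :: q₂ = (q₁ ++ a :: m₁) ++ y :: m₂ := by rw [hm]; simp
    have hav : a ∈ l₁ ++ y :: (l₂ ++ a :: b :: p₂) := by simp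
    have haw : a ∈ (q₁ ++ a :: m₁) ++ y :: m₂ := by simp
    rw [e1] at hv
    rw [e2] at hw
    have hK : IsPathList E s t (l₁ ++ y :: m₂) :=
      splice hv hw fun x hx h => hfirst x hx (hsub x h)
    have haK : a ∉ l₁ ++ y :: m₂ := by
      intro h
      rcases List.mem_append.1 h with h | h
      · exact hap (List.mem_append_left _ h)
      · exact haq (hsub a h)
    obtain ⟨⟨u, z⟩, hu, hcu⟩ := exists_bottleneck c (arcs_nonempty hst hK)
    rw [arcsOf_append, Finset.mem_union] at hu
    rcases hu with hu | hu
    · obtain ⟨r₁, r₂, hr⟩ := exists_split_of_mem_arcsOf hu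
      have f1 : l₁ ++ y :: m₂ = r₁ ++ u :: z :: (r₂ ++ m₂) := by
        rw [List.append_cons, hr]; simp
      have f2 : l₁ ++ y :: (l₂ ++ a :: b :: p₂) =
          r₁ ++ u :: z :: (r₂ ++ (l₂ ++ a :: b :: p₂)) := by
        rw [List.append_cons, hr]; simp
      rw [f1] at hK hcu haK
      rw [f2] at hv hav
      rw [common_prefix hst hc hγ hconv hK hv hcu] at haK
      exact haK hav
    · obtain ⟨r₁, r₂, hr⟩ := exists_split_of_mem_arcsOf hu
      rw [hr, ← List.append_assoc] at hK hcu haK hw haw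
      rw [common_suffix hst hc hγ hconv hK hw hcu] at haK
      exact haK haw
  · push Not at hy
    have hK : IsPathList E s t ((p₁ ++ [a]) ++ b :: q₂) := by
      refine splice (l₂ := p₂) (m₁ := q₁ ++ [a]) (by simpa using hv) (by simpa using hw) ?_
      intro x hx
      rcases List.mem_append.1 hx with h | h
      · exact hy x h
      · rw [List.mem_singleton.1 h]; exact haq
    have hK' : IsPathList E s t (p₁ ++ a :: b :: q₂) := by simpa using hK
    have h1 := common_prefix hst hc hγ hconv hv hK' hb
    rw [h1] at hb ⊢
    exact common_suffix hst hc hγ hconv hK' hw hb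

lemma lower_bound (hst : s ≠ t) (hc : ∀ e ∈ E, 0 < c e) (hγ : IsFlowGame E c s t γ)
    (hconv : GameConvex E γ) : ∀ (n : ℕ) (S : Finset (V × V)), S ⊆ E → S.card ≤ n →
    ∑ P ∈ (stPaths E s t).filter (fun P => P ⊆ S), pathCap c P ≤ γ S := by
  have base : ∀ S : Finset (V × V), S ⊆ E → (∀ l, ¬ IsPathList S s t l) →
      ∑ P ∈ (stPaths E s t).filter (fun P => P ⊆ S), pathCap c P ≤ γ S := by
    intro S hS hno
    rw [Finset.filter_eq_empty_iff.2, Finset.sum_empty]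
    · exact gamma_nonneg hc hγ hS
    · intro P hP hPS
      simp only [stPaths, Finset.mem_filter, Finset.mem_powerset] at hP
      obtain ⟨-, l, hl, rfl⟩ := hP
      exact hno l (isPathList_of_subset hl hPS)
  intro n
  induction n with
  | zero =>
    intro S hS hn
    have : S = ∅ := by simpa using hn
    subst this
    refine base _ hS fun l hl => ?_
    obtain ⟨e, he⟩ := arcs_nonempty hst hl
    simpa using arcs_subset hl he
  | succ n ih =>
    intro S hS hn
    by_cases hno : ∀ l, ¬ IsPathList S s t l
    · exact base S hS hno
    push Not at hno
    obtain ⟨l, hl⟩ := hno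
    have hlE := isPathList_mono hS hl
    have hPS := arcs_subset hl
    obtain ⟨e, he, hb⟩ := exists_bottleneck c (arcs_nonempty hst hl)
    have h1 := marginal hst hc hγ hconv hlE he hS hPS
    have h2 := ih (S.erase e) ((Finset.erase_subset _ _).trans hS)
      (by rw [Finset.card_erase_of_mem (hPS he)]; omega)
    have h3 : (stPaths E s t).filter (fun P => P ⊆ S) ⊆
        insert (arcsOf l) ((stPaths E s t).filter (fun P => P ⊆ S.erase e)) := by
      intro P hP
      rw [Finset.mem_filter] at hP
      rw [Finset.mem_insert, Finset.mem_filter]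
      by_cases heP : e ∈ P
      · left
        have := hP.1
        simp only [stPaths, Finset.mem_filter, Finset.mem_powerset] at this
        obtain ⟨-, k, hk, rfl⟩ := this
        rw [bottleneck_unique hst hc hγ hconv hlE hk he heP hb]
      · exact Or.inr ⟨hP.1, Finset.subset_erase.2 ⟨hP.2, heP⟩⟩
    have h4 : ∀ P ∈ insert (arcsOf l) ((stPaths E s t).filter (fun P => P ⊆ S.erase e)),
        0 ≤ pathCap c P := by
      intro P hP
      rw [Finset.mem_insert, Finset.mem_filter] at hP
      rcases hP with rfl | hP
      · exact (pathCap_pos hst hc hlE).le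
      · have := hP.1
        simp only [stPaths, Finset.mem_filter, Finset.mem_powerset] at this
        obtain ⟨-, k, hk, rfl⟩ := this
        exact (pathCap_pos hst hc hk).le
    have h5 := Finset.sum_le_sum_of_subset_of_nonneg h3 (fun P hP _ => h4 P hP)
    rw [Finset.sum_insert] at h5
    · linarith
    · intro h
      exact Finset.notMem_erase e S ((Finset.mem_filter.1 h).2 he)

end Game

end Helpers

/-- If every arc lies on some `s`-`t` path and the flow game is convex,
then the characteristic function decomposes as a positively weighted sum of unanimity
games over the `s`-`t` paths: `γ(S) = Σ_{P ∈ 𝒫 : P ⊆ S} c(P)` for every `S ⊆ E`. -/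
theorem gamma_decomposition_of_convexity
    {V : Type*} [Fintype V] [DecidableEq V]
    (E : Finset (V × V)) (c : V × V → ℝ) (s t : V) (γ : Finset (V × V) → ℝ)
    (hst : s ≠ t) (hc : ∀ e ∈ E, 0 < c e)
    (hγ : IsFlowGame E c s t γ)
    (hcover : ∀ e ∈ E, ∃ P : Finset (V × V), IsSTPath E s t P ∧ e ∈ P)
    (hconv : GameConvex E γ) :
    ∀ S : Finset (V × V), S ⊆ E →
      γ S = ∑ P ∈ (stPaths E s t).filter (fun P => P ⊆ S), pathCap c P := by
  intro S hS
  apply le_antisymm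
  · obtain ⟨f, hf, h⟩ := (hγ S hS).1
    rw [← h]
    exact value_le_sum hst hc S.card S hS le_rfl f hf
  · exact lower_bound hst hc hγ hconv S.card S hS le_rfl
end
end

section
/- Let D = (V, E; c; s, t) be a flow network in which every arc belongs to at least one s-t path, and suppose that: (i) the directed graph (V, E) is acyclic; (ii) each bottleneck arc b ∈ B belongs to a unique s-t path; and (iii) each non-bottleneck arc e ∉ B satisfies c(e) ≥ Σ_{P ∈ 𝒫_e} c(P). Then for every coalition S ⊆ E, the function f : E → ℝ defined by f(a) = Σ_{P ∈ 𝒫 : P ⊆ S, a ∈ P} c(P) is a feasible flow on S whose value equals Σ_{P ∈ 𝒫 : P ⊆ S} c(P). -/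
open scoped Classical
open Finset

noncomputable section

theorem arcsOf_cons_aux {V : Type*} [DecidableEq V] (a b : V) (l : List V) :
    arcsOf (a :: b :: l) = insert (a, b) (arcsOf (b :: l)) := by
  simp [arcsOf]

theorem arcsOf_mem_aux {V : Type*} [DecidableEq V] (l : List V) (e : V × V)
    (h : e ∈ arcsOf l) : e.1 ∈ l := by
  obtain ⟨x, y⟩ := e
  simp only [arcsOf, List.mem_toFinset] at h
  exact (List.of_mem_zip h).1

theorem arcs_balance_aux {V : Type*} [DecidableEq V] (E : Finset (V × V)) (v b : V) (l : List V) :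
    ∀ a, (a :: l).Nodup → (a :: l).getLast? = some b →
      List.IsChain (fun x y => (x, y) ∈ E) (a :: l) →
      arcsOf (a :: l) ⊆ E ∧
      (∑ e ∈ arcsOf (a :: l), (if e.1 = v then (1:ℝ) else 0)) + (if v = b then 1 else 0)
      = (∑ e ∈ arcsOf (a :: l), (if e.2 = v then (1:ℝ) else 0)) + (if v = a then 1 else 0) := by
  induction l with
  | nil =>
    intro a _ h _
    simp at h
    subst h
    simp [arcsOf]
  | cons d l ih =>
    intro a hn hl hch
    have hn' := List.nodup_cons.1 hn
    rw [List.isChain_cons_cons] at hch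
    obtain ⟨h1, h2⟩ := ih d hn'.2 (by simpa using hl) hch.2
    have hnot : (a, d) ∉ arcsOf (d :: l) := fun h => hn'.1 (arcsOf_mem_aux _ _ h)
    rw [arcsOf_cons_aux]
    refine ⟨Finset.insert_subset hch.1 h1, ?_⟩
    rw [Finset.sum_insert hnot, Finset.sum_insert hnot]
    simp only [eq_comm (a := a), eq_comm (a := d)] at *
    linarith

theorem stpath_balance_aux {V : Type*} [DecidableEq V] (E : Finset (V × V)) (s t v : V)
    (P : Finset (V × V)) (h : IsSTPath E s t P) :
    P ⊆ E ∧ (∑ e ∈ P, (if e.1 = v then (1:ℝ) else 0)) + (if v = t then 1 else 0)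
      = (∑ e ∈ P, (if e.2 = v then (1:ℝ) else 0)) + (if v = s then 1 else 0) := by
  obtain ⟨vs, ⟨hn, hh, hl, hch⟩, rfl⟩ := h
  cases vs with
  | nil => simp at hh
  | cons a l =>
    simp at hh
    subst hh
    exact arcs_balance_aux E v t l a hn hl hch

theorem sum_swap_aux {V : Type*} [DecidableEq V] (E S : Finset (V × V)) (s t : V)
    (w : Finset (V × V) → ℝ) (p : V × V → Prop) :
    ∑ e ∈ E.filter p, ∑ P ∈ (stPaths E s t).filter (fun P => P ⊆ S ∧ e ∈ P), w P
      = ∑ P ∈ (stPaths E s t).filter (fun P => P ⊆ S),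
          w P * ∑ e ∈ P, (if p e then (1:ℝ) else 0) := by
  have h1 : ∀ e, ∑ P ∈ (stPaths E s t).filter (fun P => P ⊆ S ∧ e ∈ P), w P
      = ∑ P ∈ (stPaths E s t).filter (fun P => P ⊆ S), if e ∈ P then w P else 0 := by
    intro e
    rw [← Finset.filter_filter, Finset.sum_filter]
  simp only [h1]
  rw [Finset.sum_comm]
  refine Finset.sum_congr rfl fun P hP => ?_
  have hPE : P ⊆ E := by
    simp only [stPaths, Finset.mem_filter, Finset.mem_powerset] at hP
    exact hP.1.1
  rw [Finset.sum_filter, Finset.mul_sum, ← Finset.sum_subset hPE]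
  · refine Finset.sum_congr rfl fun e he => ?_
    simp [he]
  · intro e _ he
    simp [he]

/-- Under acyclicity, bottleneck exclusivity, and non-bottleneck
sufficiency, for every coalition `S ⊆ E` the function routing `c(P)` units along every
`s`-`t` path `P ⊆ S` is a feasible flow on `S` of value `Σ_{P ∈ 𝒫 : P ⊆ S} c(P)`. -/
theorem path_flow_feasible
    {V : Type*} [Fintype V] [DecidableEq V]
    (E : Finset (V × V)) (c : V × V → ℝ) (s t : V) (γ : Finset (V × V) → ℝ)
    (hst : s ≠ t) (hc : ∀ e ∈ E, 0 < c e)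
    (hγ : IsFlowGame E c s t γ)
    (hcover : ∀ e ∈ E, ∃ P : Finset (V × V), IsSTPath E s t P ∧ e ∈ P)
    (hacyc : ¬ HasDirectedCycle E)
    (huniq : ∀ b : V × V, IsBottleneck E c s t b →
      ∃! P : Finset (V × V), IsSTPath E s t P ∧ b ∈ P)
    (hsuff : ∀ e ∈ E, ¬ IsBottleneck E c s t e →
      ∑ P ∈ (stPaths E s t).filter (fun P => e ∈ P), pathCap c P ≤ c e) :
    ∀ S : Finset (V × V), S ⊆ E →
      IsFeasibleFlow E c s t S
        (fun a => ∑ P ∈ (stPaths E s t).filter (fun P => P ⊆ S ∧ a ∈ P), pathCap c P) ∧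
      flowValue E s
        (fun a => ∑ P ∈ (stPaths E s t).filter (fun P => P ⊆ S ∧ a ∈ P), pathCap c P)
        = ∑ P ∈ (stPaths E s t).filter (fun P => P ⊆ S), pathCap c P := by
  intro S hS
  have hP0 : ∀ P ∈ stPaths E s t, 0 ≤ pathCap c P := by
    intro P hP
    simp only [stPaths, Finset.mem_filter, Finset.mem_powerset] at hP
    apply Real.sInf_nonneg
    rintro _ ⟨e, he, rfl⟩
    exact (hc e (hP.1 he)).le
  have hle : ∀ P : Finset (V × V), ∀ e ∈ P, pathCap c P ≤ c e := by
    intro P e he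
    exact csInf_le (P.finite_toSet.image c).bddBelow ⟨e, he, rfl⟩
  have hbal : ∀ v, ∀ P ∈ (stPaths E s t).filter (fun P => P ⊆ S),
      (∑ e ∈ P, (if e.1 = v then (1:ℝ) else 0)) + (if v = t then 1 else 0)
      = (∑ e ∈ P, (if e.2 = v then (1:ℝ) else 0)) + (if v = s then 1 else 0) := by
    intro v P hP
    simp only [stPaths, Finset.mem_filter, Finset.mem_powerset] at hP
    exact (stpath_balance_aux E s t v P hP.1.2).2
  refine ⟨⟨?_, ?_, ?_⟩, ?_⟩
  · intro e he
    refine ⟨Finset.sum_nonneg fun P hP => hP0 P (Finset.mem_filter.1 hP).1, ?_⟩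
    have hsub : ∑ P ∈ (stPaths E s t).filter (fun P => P ⊆ S ∧ e ∈ P), pathCap c P
        ≤ ∑ P ∈ (stPaths E s t).filter (fun P => e ∈ P), pathCap c P := by
      apply Finset.sum_le_sum_of_subset_of_nonneg
      · intro P hP
        simp only [Finset.mem_filter] at hP ⊢
        exact ⟨hP.1, hP.2.2⟩
      · intro P hP _
        exact hP0 P (Finset.mem_filter.1 hP).1
    refine hsub.trans ?_
    by_cases hb : IsBottleneck E c s t e
    · obtain ⟨P, ⟨_, hPe⟩, hu⟩ := huniq e hb
      have hs : (stPaths E s t).filter (fun P => e ∈ P) ⊆ {P} := by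
        intro Q hQ
        simp only [stPaths, Finset.mem_filter, Finset.mem_powerset] at hQ
        exact Finset.mem_singleton.2 (hu Q ⟨hQ.1.2, hQ.2⟩)
      rcases Finset.subset_singleton_iff.1 hs with h | h
      · rw [h]
        simpa using (hc e he).le
      · rw [h]
        simpa using hle P e hPe
    · exact hsuff e he hb
  · intro e he
    apply Finset.sum_eq_zero
    intro P hP
    exact absurd ((Finset.mem_filter.1 hP).2.1 (Finset.mem_filter.1 hP).2.2) he
  · intro v hvs hvt
    have h1 := sum_swap_aux E S s t (pathCap c) (fun e => e.2 = v)
    have h2 := sum_swap_aux E S s t (pathCap c) (fun e => e.1 = v)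
    have h3 : ∀ P ∈ (stPaths E s t).filter (fun P => P ⊆ S),
        (∑ e ∈ P, (if e.1 = v then (1:ℝ) else 0))
        = (∑ e ∈ P, (if e.2 = v then (1:ℝ) else 0)) := by
      intro P hP
      simpa [hvs, hvt] using hbal v P hP
    convert h1.trans ((Finset.sum_congr rfl fun P hP => ?_).trans h2.symm)
    convert congrArg (pathCap c P * ·) (h3 P hP).symm
  · have h1 := sum_swap_aux E S s t (pathCap c) (fun e => e.2 = s)
    have h2 := sum_swap_aux E S s t (pathCap c) (fun e => e.1 = s)
    have h3 : ∀ P ∈ (stPaths E s t).filter (fun P => P ⊆ S),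
        (∑ e ∈ P, (if e.1 = s then (1:ℝ) else 0))
        = (∑ e ∈ P, (if e.2 = s then (1:ℝ) else 0)) + 1 := by
      intro P hP
      simpa [hst] using hbal s P hP
    have h4 : ∑ P ∈ (stPaths E s t).filter (fun P => P ⊆ S),
          pathCap c P * ∑ e ∈ P, (if e.1 = s then (1:ℝ) else 0)
        = ∑ P ∈ (stPaths E s t).filter (fun P => P ⊆ S),
          pathCap c P * ∑ e ∈ P, (if e.2 = s then (1:ℝ) else 0)
        + ∑ P ∈ (stPaths E s t).filter (fun P => P ⊆ S), pathCap c P := by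
      rw [← Finset.sum_add_distrib]
      refine Finset.sum_congr rfl fun P hP => ?_
      rw [h3 P hP]
      ring
    unfold flowValue
    rw [sub_eq_iff_eq_add, add_comm]
    convert h2.trans ?_
    convert h4
    convert h1
end
end
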